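/- Let P be a real symmetric d×d matrix such that I − P² is positive semidefinite, and let S be the positive semidefinite square root of I − P². Let U be the 2d×2d block matrix [[P, S], [−S, P]]. Then for every n ≥ 1, U^n equals the block matrix [[T_n(P), S · U_{n−1}(P)], [−S · U_{n−1}(P), T_n(P)]], where T_n(P) and U_{n−1}(P) denote the evaluations at P of the Chebyshev polynomials of the first and second kind, respectively. -/

import Mathlib

open Matrix Polynomial
open scoped MatrixOrder

/-! The block matrix `[[P, S], [-S, P]]` is `p + j`, where `p = [[P, 0], [0, P]]` commutes with
`j = [[0, S], [-S, 0]]` and `j² = p² - 1`. Thus `j` plays the role of `√(x² - 1)` in the identity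
`(x + √(x² - 1))ⁿ = Tₙ(x) + √(x² - 1) Uₙ₋₁(x)`, which follows by induction from
`Tₙ₊₁ = x Tₙ + (x² - 1) Uₙ₋₁` and `Uₙ = x Uₙ₋₁ + Tₙ`. -/

section Algebra

variable {R A : Type*} [CommRing R] [Ring A] [Algebra R A]

theorem aeval_T_add_one_eq_mul_aeval_T_add (p : A) (n : ℤ) :
    aeval p (Chebyshev.T R (n + 1)) =
      p * aeval p (Chebyshev.T R n) + (p ^ 2 - 1) * aeval p (Chebyshev.U R (n - 1)) := by
  have recurrence : Chebyshev.T R (n + 1) =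
      X * Chebyshev.T R n + (X ^ 2 - 1) * Chebyshev.U R (n - 1) := by
    grind [Chebyshev.T_eq_X_mul_T_sub_pol_U R (n - 1)]
  simp [recurrence]

theorem aeval_U_eq_mul_aeval_U_add_aeval_T (p : A) (n : ℤ) :
    aeval p (Chebyshev.U R n) =
      p * aeval p (Chebyshev.U R (n - 1)) + aeval p (Chebyshev.T R n) := by
  simpa using congrArg (aeval p) (Chebyshev.U_eq_X_mul_U_add_T R (n - 1))

theorem add_pow_eq_aeval_T_add_mul_aeval_U {p j : A} (hcomm : Commute p j)
    (hsq : j ^ 2 = p ^ 2 - 1) (n : ℕ) :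
    (p + j) ^ n =
      aeval p (Chebyshev.T R n) + j * aeval p (Chebyshev.U R ((n : ℤ) - 1)) := by
  induction n with
  | zero => simp
  | succ n ih =>
    set t := aeval p (Chebyshev.T R n)
    set u := aeval p (Chebyshev.U R ((n : ℤ) - 1))
    calc (p + j) ^ (n + 1)
        = (p + j) * (t + j * u) := by rw [pow_succ', ih]
      _ = p * t + j ^ 2 * u + (p * j * u + j * t) := by noncomm_ring
      _ = (p * t + (p ^ 2 - 1) * u) + j * (p * u + t) := by
        rw [hsq, hcomm.eq, mul_add, mul_assoc j p u]
      _ = aeval p (Chebyshev.T R (n + 1 : ℕ)) +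
          j * aeval p (Chebyshev.U R (((n + 1 : ℕ) : ℤ) - 1)) := by
        rw [Nat.cast_succ, add_sub_cancel_right, aeval_T_add_one_eq_mul_aeval_T_add,
          aeval_U_eq_mul_aeval_U_add_aeval_T p (n : ℤ)]

end Algebra

section Blocks

variable {R A m : Type*} [Fintype m] [DecidableEq m]

theorem aeval_fromBlocks_diagonal {l : Type*} [Fintype l] [DecidableEq l] [CommSemiring R]
    [Semiring A] [Algebra R A] (M : Matrix l l A) (N : Matrix m m A) (q : R[X]) :
    aeval (fromBlocks M 0 0 N) q = fromBlocks (aeval M q) 0 0 (aeval N q) := by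
  induction q using Polynomial.induction_on' with
  | add q r hq hr => simp [hq, hr, fromBlocks_add]
  | monomial k a =>
    simp [aeval_monomial, ← Algebra.smul_def, fromBlocks_diagonal_pow, fromBlocks_smul]

theorem fromBlocks_pow_eq_chebyshev [CommRing R] [Ring A] [Algebra R A] {P S : Matrix m m A}
    (hcomm : Commute P S) (hsq : S ^ 2 = 1 - P ^ 2) (n : ℕ) :
    fromBlocks P S (-S) P ^ n =
      fromBlocks (aeval P (Chebyshev.T R n)) (S * aeval P (Chebyshev.U R ((n : ℤ) - 1)))
        (-(S * aeval P (Chebyshev.U R ((n : ℤ) - 1)))) (aeval P (Chebyshev.T R n)) := by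
  set p := fromBlocks P 0 0 P with hp
  set j := fromBlocks 0 S (-S) 0 with hj
  have decomposition : fromBlocks P S (-S) P = p + j := by simp [hp, hj, fromBlocks_add]
  have commute : Commute p j := by
    simp [hp, hj, commute_iff_eq, fromBlocks_multiply, hcomm.eq]
  have square : j ^ 2 = p ^ 2 - 1 := by
    have square_blocks : j ^ 2 = fromBlocks (-S ^ 2) 0 0 (-S ^ 2) := by
      simp [hj, sq, fromBlocks_multiply]
    apply eq_sub_of_add_eq
    simp [square_blocks, hsq, hp, fromBlocks_diagonal_pow, ← fromBlocks_one, fromBlocks_add]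
  rw [decomposition, add_pow_eq_aeval_T_add_mul_aeval_U (R := R) commute square]
  simp [hp, hj, aeval_fromBlocks_diagonal, fromBlocks_multiply, fromBlocks_add]

end Blocks

open scoped ComplexOrder in
theorem block_matrix_pow_chebyshev_general {𝕜 m : Type*} [RCLike 𝕜] [Fintype m] [DecidableEq m]
    {P : Matrix m m 𝕜} (h : (1 - P ^ 2).PosSemidef) (n : ℕ) :
    fromBlocks P (CFC.sqrt (1 - P ^ 2)) (-CFC.sqrt (1 - P ^ 2)) P ^ n =
      fromBlocks
        (aeval P (Chebyshev.T 𝕜 n))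
        (CFC.sqrt (1 - P ^ 2) * aeval P (Chebyshev.U 𝕜 ((n : ℤ) - 1)))
        (-(CFC.sqrt (1 - P ^ 2) * aeval P (Chebyshev.U 𝕜 ((n : ℤ) - 1))))
        (aeval P (Chebyshev.T 𝕜 n)) := by
  have commute_sq : Commute (1 - P ^ 2) P :=
    (Commute.one_left P).sub_left (Commute.pow_self P 2)
  have commute_sqrt : Commute (CFC.sqrt (1 - P ^ 2)) P := commute_sq.cfcₙ_nnreal _
  exact fromBlocks_pow_eq_chebyshev commute_sqrt.symm (CFC.sq_sqrt _ h.nonneg) n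

/-- with `P` real symmetric, `I − P²` positive semidefinite, `S = √(I − P²)` and
`U = [[P, S], [−S, P]]`, for every `n ≥ 1`,
`U^n = [[T_n(P), S·U_{n−1}(P)], [−S·U_{n−1}(P), T_n(P)]]`. -/
theorem block_matrix_pow_chebyshev
    (d : ℕ) (P : Matrix (Fin d) (Fin d) ℝ) (hP : P.IsSymm)
    (h : ((1 : Matrix (Fin d) (Fin d) ℝ) - P ^ 2).PosSemidef)
    (n : ℕ) (hn : 1 ≤ n) :
    (Matrix.fromBlocks P (CFC.sqrt (1 - P ^ 2)) (-CFC.sqrt (1 - P ^ 2)) P) ^ n =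
      Matrix.fromBlocks
        (Polynomial.aeval P (Polynomial.Chebyshev.T ℝ n))
        (CFC.sqrt (1 - P ^ 2) * Polynomial.aeval P (Polynomial.Chebyshev.U ℝ ((n : ℤ) - 1)))
        (-(CFC.sqrt (1 - P ^ 2) * Polynomial.aeval P (Polynomial.Chebyshev.U ℝ ((n : ℤ) - 1))))
        (Polynomial.aeval P (Polynomial.Chebyshev.T ℝ n)) :=
  block_matrix_pow_chebyshev_general h n
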